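/- arXiv:1004.3455 — 3 statements merged into one kernel-verified Lean document; each statement's English description precedes it below -/
import Mathlib

section
/- Let (α, μ) be a σ-finite measure space and f : α → α a measurable bijection with measurable inverse which preserves μ. Let U be a measurable set no point of which returns to U (for every x ∈ U and every j ≥ 1, f^[j](x) ∉ U), and let E be a measurable set with μ(E) < ∞. Then for μ-almost every x ∈ U, the set of times {j ∈ ℕ : f^[j](x) ∈ E} is finite. -/
open MeasureTheory Function Set

/-- If no point of a measurable set `U` returns to `U` under a
measure-preserving measurable bijection `f`, and `E` has finite measure, then for
μ-a.e. `x ∈ U`, the set of times `j` with `f^[j] x ∈ E` is finite. -/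
theorem windtree_nonreturning_finitely_many_visits
    {α : Type*} [MeasurableSpace α] (μ : Measure α) [SigmaFinite μ]
    (f : α ≃ᵐ α) (hf : MeasurePreserving f μ μ)
    (U E : Set α) (hU : MeasurableSet U) (hE : MeasurableSet E) (hEfin : μ E < ⊤)
    (hnr : ∀ x ∈ U, ∀ j : ℕ, 1 ≤ j → (⇑f)^[j] x ∉ U) :
    ∀ᵐ x ∂μ, x ∈ U → {j : ℕ | (⇑f)^[j] x ∈ E}.Finite := by
  have hL : ∀ j : ℕ, LeftInverse ((⇑f.symm)^[j]) ((⇑f)^[j]) := fun j =>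
    LeftInverse.iterate f.symm_apply_apply j
  have hR : ∀ j : ℕ, LeftInverse ((⇑f)^[j]) ((⇑f.symm)^[j]) := fun j =>
    LeftInverse.iterate f.apply_symm_apply j
  have hTm : ∀ j : ℕ, MeasurableSet (((⇑f.symm)^[j]) ⁻¹' U ∩ E) := fun j =>
    ((f.symm.measurable.iterate j) hU).inter hE
  have hmeas : ∀ j : ℕ, μ (U ∩ ((⇑f)^[j]) ⁻¹' E) = μ (((⇑f.symm)^[j]) ⁻¹' U ∩ E) := by
    intro j
    rw [← (hf.iterate j).measure_preimage (hTm j).nullMeasurableSet]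
    congr 1
    ext x
    simp [hL j x]
  have key : ∀ i j : ℕ, i < j → ∀ y, (⇑f.symm)^[i] y ∈ U → (⇑f.symm)^[j] y ∈ U → False := by
    intro i j hij y hi hj
    refine hnr _ hj (j - i) (by omega) ?_
    obtain ⟨k, rfl⟩ := Nat.exists_eq_add_of_lt hij
    have h1 : i + k + 1 = (k + 1) + i := by omega
    have h2 : i + k + 1 - i = k + 1 := by omega
    rw [h2, h1, iterate_add_apply (⇑f.symm) (k + 1) i, hR (k + 1)]
    exact hi
  have hdisj : Pairwise (Disjoint on fun j : ℕ => ((⇑f.symm)^[j]) ⁻¹' U ∩ E) := by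
    intro i j hij
    refine Set.disjoint_left.2 fun y hi hj => ?_
    rcases lt_or_gt_of_ne hij with h | h
    · exact key i j h y hi.1 hj.1
    · exact key j i h y hj.1 hi.1
  have hsum : ∑' j : ℕ, μ (U ∩ ((⇑f)^[j]) ⁻¹' E) ≠ ⊤ := by
    simp_rw [hmeas]
    rw [← measure_iUnion hdisj hTm]
    exact ((measure_mono (Set.iUnion_subset fun j => Set.inter_subset_right)).trans_lt hEfin).ne
  filter_upwards [ae_eventually_notMem hsum] with x hx hxU
  rw [← Nat.cofinite_eq_atTop, Filter.eventually_cofinite] at hx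
  refine hx.subset fun j hj => ?_
  simpa [hxU] using hj
end

section
/- Let (α, μ) be a σ-finite measure space and f : α → α a measurable bijection with measurable inverse which preserves μ. Let D ⊆ E be measurable sets with μ(E) < ∞. Then the measure of the nonreturning part of D is at most the measure of the nonreturning part of E: μ({x ∈ D : ∀ j ≥ 1, f^[j](x) ∉ D}) ≤ μ({x ∈ E : ∀ j ≥ 1, f^[j](x) ∉ E}). -/
open MeasureTheory Function Set

lemma wt_tsum_le {α : Type*} [MeasurableSpace α] (μ : Measure α)
    (f : α ≃ᵐ α) (hf : MeasurePreserving f μ μ) (W S : Set α)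
    (hW : MeasurableSet W) (hS : MeasurableSet S)
    (hw : ∀ x ∈ W, ∀ j : ℕ, 1 ≤ j → (⇑f)^[j] x ∉ W) :
    ∑' n : ℕ, μ (W ∩ (⇑f)^[n] ⁻¹' S) ≤ μ S := by
  have hinv : ∀ n : ℕ, LeftInverse (⇑f.symm)^[n] (⇑f)^[n] := fun n =>
    LeftInverse.iterate f.symm_apply_apply n
  have hinv' : ∀ n : ℕ, LeftInverse (⇑f)^[n] (⇑f.symm)^[n] := fun n =>
    LeftInverse.iterate f.apply_symm_apply n
  have hT : ∀ n : ℕ, MeasurableSet ((⇑f.symm)^[n] ⁻¹' W ∩ S) := fun n =>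
    ((f.symm.measurable.iterate n) hW).inter hS
  have key : ∀ n : ℕ, μ (W ∩ (⇑f)^[n] ⁻¹' S) = μ ((⇑f.symm)^[n] ⁻¹' W ∩ S) := by
    intro n
    rw [← (hf.iterate n).measure_preimage (hT n).nullMeasurableSet]
    congr 1
    ext x
    simp [(hinv n) x]
  have aux : ∀ m n : ℕ, m < n → ∀ y, (⇑f.symm)^[m] y ∈ W → (⇑f.symm)^[n] y ∈ W → False := by
    intro m n hmn y hm hn
    apply hw _ hn (n - m) (by omega)
    have h : n = (n - m) + m := by omega
    have h2 : (⇑f.symm)^[n] y = (⇑f.symm)^[n - m] ((⇑f.symm)^[m] y) := by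
      rw [← iterate_add_apply, ← h]
    rw [h2, hinv' (n - m)]
    exact hm
  simp_rw [key]
  rw [← measure_iUnion _ hT]
  · exact measure_mono (iUnion_subset fun n => inter_subset_right)
  · intro m n hmn
    refine Set.disjoint_left.2 fun y hy hy' => ?_
    rcases lt_or_gt_of_ne hmn with h | h
    · exact aux m n h y hy.1 hy'.1
    · exact aux n m h y hy'.1 hy.1

lemma wt_meas {α : Type*} [MeasurableSpace α]
    (f : α ≃ᵐ α) (D : Set α) (hD : MeasurableSet D) :
    MeasurableSet {x ∈ D | ∀ j : ℕ, 1 ≤ j → (⇑f)^[j] x ∉ D} := by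
  have : {x ∈ D | ∀ j : ℕ, 1 ≤ j → (⇑f)^[j] x ∉ D}
      = D ∩ ⋂ j : ℕ, ⋂ _ : 1 ≤ j, ((⇑f)^[j] ⁻¹' D)ᶜ := by
    ext x; simp
  rw [this]
  exact hD.inter (MeasurableSet.iInter fun j => MeasurableSet.iInter fun _ =>
    ((f.measurable.iterate j) hD).compl)

/-- For a measure-preserving measurable bijection `f` and measurable sets
`D ⊆ E` with `μ E < ∞`, the measure of the nonreturning part of `D` is at most the
measure of the nonreturning part of `E`. -/
theorem windtree_nonreturning_measure_mono
    {α : Type*} [MeasurableSpace α] (μ : Measure α) [SigmaFinite μ]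
    (f : α ≃ᵐ α) (hf : MeasurePreserving f μ μ)
    (D E : Set α) (hD : MeasurableSet D) (hE : MeasurableSet E)
    (hDE : D ⊆ E) (hEfin : μ E < ⊤) :
    μ {x ∈ D | ∀ j : ℕ, 1 ≤ j → (⇑f)^[j] x ∉ D} ≤
      μ {x ∈ E | ∀ j : ℕ, 1 ≤ j → (⇑f)^[j] x ∉ E} := by
  have hWm := wt_meas f D hD
  have hNm := wt_meas f E hE
  set W := {x ∈ D | ∀ j : ℕ, 1 ≤ j → (⇑f)^[j] x ∉ D} with hWdef
  set N := {x ∈ E | ∀ j : ℕ, 1 ≤ j → (⇑f)^[j] x ∉ E} with hNdef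
  have hw : ∀ x ∈ W, ∀ j : ℕ, 1 ≤ j → (⇑f)^[j] x ∉ W :=
    fun x hx j hj h => hx.2 j hj h.1
  have h1 := wt_tsum_le μ f hf W E hWm hE hw
  have h2 := wt_tsum_le μ f hf W N hWm hNm hw
  have hfin := ae_finite_setOf_mem (h1.trans_lt hEfin).ne
  refine le_trans ?_ ((measure_iUnion_le _).trans h2)
  apply measure_mono_ae
  filter_upwards [hfin] with x hx hxW
  have hxW' : x ∈ W := hxW
  obtain ⟨n, hn, hmax⟩ := Set.exists_max_image _ id hx
    ⟨0, hxW', by simpa using hDE hxW'.1⟩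
  refine mem_iUnion.2 ⟨n, hxW', hn.2, fun j hj hjE => ?_⟩
  rw [← iterate_add_apply] at hjE
  have := hmax (j + n) ⟨hxW', hjE⟩
  simp only [id] at this
  omega
end

section
/- Let (α, μ) be a σ-finite measure space and f : α → α a measurable bijection with measurable inverse which preserves μ. Let D : ℕ → Set α be a monotone increasing sequence of measurable sets with μ(D n) < ∞ for every n and with ⋃ₙ D n = α. Suppose there exists a strictly increasing sequence of indices n₁ < n₂ < ... such that μ({x ∈ D n_k : ∀ j ≥ 1, f^[j](x) ∉ D n_k}) → 0 as k → ∞. Then f is conservative with respect to μ: for every measurable set S, μ-almost every x ∈ S satisfies f^[j](x) ∈ S for some integer j ≥ 1. -/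
open MeasureTheory Function Set Filter

theorem wandering_sum_le
    {α : Type*} [MeasurableSpace α] (μ : Measure α)
    (f : α ≃ᵐ α) (hf : MeasurePreserving f μ μ)
    (W B : Set α) (hW : MeasurableSet W) (hB : MeasurableSet B)
    (hwand : ∀ x ∈ W, ∀ j : ℕ, 1 ≤ j → (⇑f)^[j] x ∉ W) :
    ∑' j : ℕ, μ (W ∩ (⇑f)^[j] ⁻¹' B) ≤ μ B := by
  have hA : ∀ j : ℕ, MeasurableSet (((⇑f.symm)^[j] ⁻¹' W) ∩ B) := fun j =>
    ((f.symm.measurable.iterate j) hW).inter hB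
  have hli : ∀ j : ℕ, LeftInverse ((⇑f.symm)^[j]) ((⇑f)^[j]) := fun j =>
    LeftInverse.iterate (fun x => f.symm_apply_apply x) j
  have hri : ∀ j : ℕ, LeftInverse ((⇑f)^[j]) ((⇑f.symm)^[j]) := fun j =>
    LeftInverse.iterate (fun x => f.apply_symm_apply x) j
  have heq : ∀ j : ℕ, μ (W ∩ (⇑f)^[j] ⁻¹' B) = μ (((⇑f.symm)^[j] ⁻¹' W) ∩ B) := by
    intro j
    rw [← (hf.iterate j).measure_preimage (hA j).nullMeasurableSet]
    congr 1
    ext x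
    simp only [mem_inter_iff, mem_preimage, hli j x]
  simp_rw [heq]
  have key : ∀ i j : ℕ, i < j → ∀ y, (⇑f.symm)^[i] y ∈ W → (⇑f.symm)^[j] y ∈ W → False := by
    intro i j hij y hi hj
    obtain ⟨d, rfl⟩ := Nat.exists_eq_add_of_lt hij
    refine hwand _ hj (d + 1) (by omega) ?_
    have h1 : (⇑f.symm)^[i + d + 1] y = (⇑f.symm)^[d + 1] ((⇑f.symm)^[i] y) := by
      rw [← iterate_add_apply, show d + 1 + i = i + d + 1 by omega]
    rw [h1, hri (d + 1)]
    exact hi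
  rw [← measure_iUnion _ hA]
  · exact measure_mono (iUnion_subset fun j => inter_subset_right)
  · intro i j hij
    refine Set.disjoint_left.2 fun y hi hj => ?_
    rcases lt_or_gt_of_ne hij with h | h
    · exact key i j h y hi.1 hj.1
    · exact key j i h y hj.1 hi.1

/-- Let `f` be a measure-preserving measurable bijection of a σ-finite
measure space, and let `D n` be an increasing exhausting sequence of finite-measure
measurable sets.  If along some strictly increasing subsequence the measure of the
nonreturning part of `D (ns k)` tends to `0`, then `f` is conservative: for every
measurable set `S`, μ-a.e. point of `S` returns to `S`. -/
theorem windtree_conservative_of_vanishing_nonreturning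
    {α : Type*} [MeasurableSpace α] (μ : Measure α) [SigmaFinite μ]
    (f : α ≃ᵐ α) (hf : MeasurePreserving f μ μ)
    (D : ℕ → Set α) (hmono : Monotone D) (hmeas : ∀ n, MeasurableSet (D n))
    (hfin : ∀ n, μ (D n) < ⊤) (hcover : ⋃ n, D n = Set.univ)
    (ns : ℕ → ℕ) (hns : StrictMono ns)
    (hlim : Tendsto
      (fun k => μ {x ∈ D (ns k) | ∀ j : ℕ, 1 ≤ j → (⇑f)^[j] x ∉ D (ns k)})
      atTop (nhds 0)) :
    ∀ S : Set α, MeasurableSet S →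
      ∀ᵐ x ∂μ, x ∈ S → ∃ j : ℕ, 1 ≤ j ∧ (⇑f)^[j] x ∈ S := by
  intro S hS
  have hmN : ∀ T : Set α, MeasurableSet T →
      MeasurableSet {x ∈ T | ∀ j : ℕ, 1 ≤ j → (⇑f)^[j] x ∉ T} := by
    intro T hT
    have : {x ∈ T | ∀ j : ℕ, 1 ≤ j → (⇑f)^[j] x ∉ T} =
        T ∩ ⋂ j : ℕ, ⋂ _ : 1 ≤ j, ((⇑f)^[j] ⁻¹' T)ᶜ := by
      ext x
      simp
    rw [this]
    exact hT.inter (MeasurableSet.iInter fun j => MeasurableSet.iInter fun _ =>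
      ((f.measurable.iterate j) hT).compl)
  set W : Set α := {x ∈ S | ∀ j : ℕ, 1 ≤ j → (⇑f)^[j] x ∉ S} with hWdef
  have hWm : MeasurableSet W := hmN S hS
  have main : ∀ m, μ (W ∩ D m) = 0 := by
    intro m
    have hwand : ∀ x ∈ W ∩ D m, ∀ j : ℕ, 1 ≤ j → (⇑f)^[j] x ∉ W ∩ D m :=
      fun x hx j hj h => hx.1.2 j hj h.1.1
    have hle : ∀ k, m ≤ k → μ (W ∩ D m) ≤
        μ {x ∈ D (ns k) | ∀ j : ℕ, 1 ≤ j → (⇑f)^[j] x ∉ D (ns k)} := by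
      intro k hk
      have hsub : D m ⊆ D (ns k) := hmono (hk.trans (hns.id_le k))
      set N : Set α := {x ∈ D (ns k) | ∀ j : ℕ, 1 ≤ j → (⇑f)^[j] x ∉ D (ns k)} with hN
      have hsum := wandering_sum_le μ f hf (W ∩ D m) (D (ns k)) (hWm.inter (hmeas m))
        (hmeas _) hwand
      have hbc := ae_eventually_notMem (hsum.trans_lt (hfin _)).ne
      have hcov : (W ∩ D m : Set α) ≤ᵐ[μ] ⋃ j : ℕ, (W ∩ D m) ∩ (⇑f)^[j] ⁻¹' N := by
        filter_upwards [hbc] with x hx hxW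
        obtain ⟨M, hM⟩ := eventually_atTop.1 hx
        have hM' : ∀ j, M ≤ j → (⇑f)^[j] x ∉ D (ns k) := fun j hj h => hM j hj ⟨hxW, h⟩
        classical
        let P : ℕ → Prop := fun j => (⇑f)^[j] x ∈ D (ns k)
        have hP0 : P 0 := hsub hxW.2
        have hPL : P (Nat.findGreatest P M) := Nat.findGreatest_spec (Nat.zero_le M) hP0
        refine mem_iUnion.2 ⟨Nat.findGreatest P M, hxW, hPL, fun j hj h => ?_⟩
        rw [← iterate_add_apply] at h
        rcases le_total M (j + Nat.findGreatest P M) with h' | h'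
        · exact hM' _ h' h
        · have := Nat.le_findGreatest (P := P) h' h
          omega
      calc μ (W ∩ D m) ≤ μ (⋃ j : ℕ, (W ∩ D m) ∩ (⇑f)^[j] ⁻¹' N) := measure_mono_ae hcov
        _ ≤ ∑' j : ℕ, μ ((W ∩ D m) ∩ (⇑f)^[j] ⁻¹' N) := measure_iUnion_le _
        _ ≤ μ N := wandering_sum_le μ f hf (W ∩ D m) N (hWm.inter (hmeas m))
            (hmN _ (hmeas _)) hwand
    exact le_antisymm (ge_of_tendsto hlim (eventually_atTop.2 ⟨m, hle⟩)) (zero_le)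
  have hW0 : μ W = 0 := by
    have : W = ⋃ m, W ∩ D m := by rw [← inter_iUnion, hcover, inter_univ]
    rw [this]
    exact measure_iUnion_null main
  filter_upwards [measure_eq_zero_iff_ae_notMem.1 hW0] with x hx hxS
  by_contra hcon
  exact hx ⟨hxS, fun j hj h => hcon ⟨j, hj, h⟩⟩
end
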